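/- arXiv:2310.09103 — 8 statements merged into one kernel-verified Lean document; each statement's English description precedes it below -/
import Mathlib

section
/- For every index k with 0 ≤ k ≤ n − 1, all four quantities x₁₁⁽ᵏ⁾, x₁₂⁽ᵏ⁾, x₂₁⁽ᵏ⁾, x₂₂⁽ᵏ⁾ of the s-state of Qin's algorithm are nonnegative; in fact x₁₁⁽ᵏ⁾ ≥ 1, x₁₂⁽ᵏ⁾ ≥ 1 and x₂₂⁽ᵏ⁾ ≥ 1 for 0 ≤ k ≤ n − 1, and x₂₁⁽ᵏ⁾ ≥ 1 for 1 ≤ k ≤ n − 1. -/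
/-!
The second column of the s-state runs the Euclidean algorithm on `(a, m)`: writing `c = x₁₂⁽ᵏ⁾`,
`d = x₂₂⁽ᵏ⁾` and `t k = [0; qₖ₊₁, …, qₙ]` (`cfTail`), one has `c = t k * d` for `k` even and
`d = t k * c` for `k` odd, because subtracting `qₖ₊₁` times one entry from the other is exactly the
relation `1 / t k - qₖ₊₁ = t (k + 1)`. Since `t k > 0` for `k < n`, the integers `c` and `d` stay
positive. The first column only receives positive multiples of nonnegative entries, so it stays
nonnegative, and `x₂₁` becomes positive at the first step. All of this is one induction on `k`
(`qin_invariant`).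
-/

/-- The value of the continued fraction `[0; q₁, …, qₙ]` where the list is `[q₁, …, qₙ]`. -/
def cfVal : List ℤ → ℚ
  | [] => 0
  | c :: rest => ((c : ℚ) + cfVal rest)⁻¹

/-- The tail `[0; qₖ₊₁, …, qₙ]` of the continued fraction `[0; q₁, …, qₙ]`; it is `0` for
`k ≥ n`. -/
def cfTail (q : ℕ → ℤ) (n k : ℕ) : ℚ :=
  cfVal (List.ofFn fun i : Fin (n - k) => q (i.1 + k + 1))

theorem cfTail_eq_zero (q : ℕ → ℤ) {n k : ℕ} (h : n ≤ k) : cfTail q n k = 0 := by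
  obtain ⟨j, hj⟩ : ∃ j, j = n - k := ⟨_, rfl⟩
  unfold cfTail
  rw [← hj]
  obtain rfl : j = 0 := by omega
  simp [cfVal]

theorem cfTail_step (q : ℕ → ℤ) {n k : ℕ} (h : k < n) :
    cfTail q n k = ((q (k + 1) : ℚ) + cfTail q n (k + 1))⁻¹ := by
  obtain ⟨j, rfl⟩ : ∃ j, n = k + 1 + j := ⟨n - (k + 1), by omega⟩
  have h1 : k + 1 + j - k = j + 1 := by omega
  have h2 : k + 1 + j - (k + 1) = j := by omega
  unfold cfTail
  rw [h1, h2, List.ofFn_succ]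
  simp only [cfVal, Fin.val_zero, Fin.val_succ, zero_add]
  congr! 6
  omega

theorem cfTail_nonneg {q : ℕ → ℤ} {n : ℕ} (hq : ∀ k, 1 ≤ k → k ≤ n → 0 < q k) (k : ℕ) :
    0 ≤ cfTail q n k := by
  by_cases h : n ≤ k
  · exact (cfTail_eq_zero q h).ge
  · have : (0 : ℚ) < q (k + 1) := by exact_mod_cast hq (k + 1) (by omega) (by omega)
    have := cfTail_nonneg hq (k + 1)
    rw [cfTail_step q (by omega)]
    positivity
termination_by n - k

theorem cfTail_pos {q : ℕ → ℤ} {n : ℕ} (hq : ∀ k, 1 ≤ k → k ≤ n → 0 < q k) {k : ℕ}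
    (h : k < n) : 0 < cfTail q n k := by
  have : (0 : ℚ) < q (k + 1) := by exact_mod_cast hq (k + 1) (by omega) (by omega)
  have := cfTail_nonneg hq (k + 1)
  rw [cfTail_step q h]
  positivity

/-- One division step: if `c = d / (q + t)` then the remainder `d - q * c` is `t * c`, and it
is positive when `t` and `c` are. -/
theorem euclid_step {c d q : ℤ} {s t : ℚ} (hs : s = ((q : ℚ) + t)⁻¹) (hq : 0 < q) (ht : 0 < t)
    (hc : 0 < c) (h : (c : ℚ) = s * d) :
    0 < d - q * c ∧ ((d - q * c : ℤ) : ℚ) = t * c := by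
  have hq' : (0 : ℚ) < q := by exact_mod_cast hq
  have hc' : (0 : ℚ) < c := by exact_mod_cast hc
  have hd : (d : ℚ) = (q + t) * c := by
    rw [h, hs, mul_inv_cancel_left₀ (by positivity)]
  have e : ((d - q * c : ℤ) : ℚ) = t * c := by push_cast; rw [hd]; ring
  exact ⟨by have : (0 : ℚ) < (d - q * c : ℤ) := by rw [e]; positivity
            exact_mod_cast this, e⟩

/-- The loop invariant of Qin's algorithm: sign conditions on the entries, together with the
value of the ratio of the second column as a continued fraction tail. -/
theorem qin_invariant {a m : ℤ} (ha : 0 < a) (hm : 0 < m) {n : ℕ} {q : ℕ → ℤ}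
    (hq : ∀ k, 1 ≤ k → k ≤ n → 0 < q k)
    (hcf : (a : ℚ) / (m : ℚ) = cfTail q n 0)
    {X : ℕ → Matrix (Fin 2) (Fin 2) ℤ}
    (hX0 : X 0 = !![1, -a; 0, m])
    (hXodd : ∀ k, Odd k → X k = !![1, 0; q k, 1] * X (k - 1))
    (hXeven : ∀ k, 0 < k → Even k → X k = !![1, q k; 0, 1] * X (k - 1)) (k : ℕ) (hk : k < n) :
    0 < X k 0 0 ∧ 0 ≤ X k 1 0 ∧ (1 ≤ k → 0 < X k 1 0) ∧ 0 < -(X k 0 1) ∧ 0 < X k 1 1 ∧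
    (Even k → ((-(X k 0 1) : ℤ) : ℚ) = cfTail q n k * (X k 1 1 : ℤ)) ∧
    (Odd k → ((X k 1 1 : ℤ) : ℚ) = cfTail q n k * (-(X k 0 1) : ℤ)) := by
  induction k with
  | zero =>
    have hm' : (m : ℚ) ≠ 0 := by exact_mod_cast hm.ne'
    rw [hX0, ← hcf]
    simp [ha, hm, hm']
  | succ k ih =>
    obtain ⟨h00, h10, h10', hc, hd, he, ho⟩ := ih (by omega)
    have hqk := hq (k + 1) (by omega) hk.le
    have ht := cfTail_pos hq hk
    have hs := cfTail_step q (show k < n by omega)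
    rcases Nat.even_or_odd k with hk2 | hk2
    · obtain ⟨hpos, heq⟩ := euclid_step hs hqk ht hc (he hk2)
      have hne : ¬ Even (k + 1) := by rw [Nat.not_even_iff_odd]; exact hk2.add_one
      have hX := hXodd (k + 1) hk2.add_one
      rw [Nat.add_sub_cancel] at hX
      have e00 : X (k + 1) 0 0 = X k 0 0 := by rw [hX]; simp [Matrix.mul_apply, Fin.sum_univ_two]
      have e01 : X (k + 1) 0 1 = X k 0 1 := by rw [hX]; simp [Matrix.mul_apply, Fin.sum_univ_two]
      have e10 : X (k + 1) 1 0 = q (k + 1) * X k 0 0 + X k 1 0 := by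
        rw [hX]; simp [Matrix.mul_apply, Fin.sum_univ_two]
      have e11 : X (k + 1) 1 1 = X k 1 1 - q (k + 1) * -(X k 0 1) := by
        rw [hX]; simp [Matrix.mul_apply, Fin.sum_univ_two]; ring
      have p10 : 0 < X (k + 1) 1 0 := by rw [e10]; positivity
      rw [e11, e01, e00]
      exact ⟨h00, p10.le, fun _ => p10, hc, hpos, fun h => absurd h hne, fun _ => heq⟩
    · obtain ⟨hpos, heq⟩ := euclid_step hs hqk ht hd (ho hk2)
      have hno : ¬ Odd (k + 1) := by rw [Nat.not_odd_iff_even]; exact hk2.add_one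
      have hX := hXeven (k + 1) (by omega) hk2.add_one
      rw [Nat.add_sub_cancel] at hX
      have e00 : X (k + 1) 0 0 = X k 0 0 + q (k + 1) * X k 1 0 := by
        rw [hX]; simp [Matrix.mul_apply, Fin.sum_univ_two]
      have e01 : -(X (k + 1) 0 1) = -(X k 0 1) - q (k + 1) * X k 1 1 := by
        rw [hX]; simp [Matrix.mul_apply, Fin.sum_univ_two]; ring
      have e10 : X (k + 1) 1 0 = X k 1 0 := by rw [hX]; simp [Matrix.mul_apply, Fin.sum_univ_two]
      have e11 : X (k + 1) 1 1 = X k 1 1 := by rw [hX]; simp [Matrix.mul_apply, Fin.sum_univ_two]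
      have p00 : 0 < X (k + 1) 0 0 := by rw [e00]; positivity
      rw [e11, e01, e10]
      exact ⟨p00, h10, fun _ => h10' hk2.pos, hpos, hd, fun _ => heq, fun h => absurd h hno⟩

/-- For `0 ≤ k ≤ n − 1`, all four entries `x₁₁⁽ᵏ⁾, x₁₂⁽ᵏ⁾, x₂₁⁽ᵏ⁾, x₂₂⁽ᵏ⁾`
of the s-state of Qin's algorithm are nonnegative; in fact `x₁₁⁽ᵏ⁾ ≥ 1`, `x₁₂⁽ᵏ⁾ ≥ 1`
and `x₂₂⁽ᵏ⁾ ≥ 1` for `0 ≤ k ≤ n − 1`, and `x₂₁⁽ᵏ⁾ ≥ 1` for `1 ≤ k ≤ n − 1`.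
Recall `x₁₂⁽ᵏ⁾ = −(X k 0 1)`. -/
theorem qin_state_nonneg (a m : ℤ) (ha : 1 < a) (ham : a < m) (hgcd : Int.gcd a m = 1)
    (n : ℕ) (q : ℕ → ℤ) (hq : ∀ k, 1 ≤ k → k ≤ n → 0 < q k)
    (hcf : (a : ℚ) / (m : ℚ) = cfVal (List.ofFn fun i : Fin n => q (i.1 + 1)))
    (X : ℕ → Matrix (Fin 2) (Fin 2) ℤ)
    (hX0 : X 0 = !![1, -a; 0, m])
    (hXodd : ∀ k, Odd k → X k = !![1, 0; q k, 1] * X (k - 1))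
    (hXeven : ∀ k, 0 < k → Even k → X k = !![1, q k; 0, 1] * X (k - 1)) :
    (∀ k ≤ n - 1,
      1 ≤ X k 0 0 ∧ 1 ≤ -(X k 0 1) ∧ 0 ≤ X k 1 0 ∧ 1 ≤ X k 1 1) ∧
    (∀ k, 1 ≤ k → k ≤ n - 1 → 1 ≤ X k 1 0) := by
  have hcf' : (a : ℚ) / (m : ℚ) = cfTail q n 0 := by simpa [cfTail] using hcf
  -- The empty continued fraction has value `0 ≠ a / m`, so `k ≤ n - 1` does mean `k < n`.
  have hn : 0 < n := by
    by_contra h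
    rw [cfTail_eq_zero q (by omega)] at hcf'
    have h1 : (0 : ℚ) < a := by exact_mod_cast (by omega : 0 < a)
    have h2 : (0 : ℚ) < m := by exact_mod_cast (by omega : 0 < m)
    exact (div_pos h1 h2).ne' hcf'
  have key := qin_invariant (by omega) (by omega) hq hcf' hX0 hXodd hXeven
  refine ⟨fun k hk => ?_, fun k hk1 hk => ?_⟩
  · obtain ⟨h00, h10, -, hc, hd, -⟩ := key k (by omega)
    exact ⟨h00, hc, h10, hd⟩
  · exact (key k (by omega)).2.2.1 hk1
end

section
/- For every k ≥ 1: if k is odd, then X̂ₖ = [[βₖ₋₁, m·αₖ₋₁ − a·βₖ₋₁], [βₖ, m·αₖ − a·βₖ]], and if k is even, then X̂ₖ = [[βₖ, m·αₖ − a·βₖ], [βₖ₋₁, m·αₖ₋₁ − a·βₖ₋₁]]. Equivalently, X̂ₖ = [[βₖ₋₁, αₖ₋₁], [βₖ, αₖ]] · X̂₀ for odd k and X̂ₖ = [[βₖ, αₖ], [βₖ₋₁, αₖ₋₁]] · X̂₀ for even k. -/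
/-!
Left multiplication by `!![1, 0; q, 1]` adds `q` times the top row to the bottom row, and
`!![1, q; 0, 1]` does the reverse. On the matrix of two consecutive pairs `(β, α)` this is one step
of the common recurrence of `α` and `β`, the older pair being overwritten by the new one. Hence
the factorization of `X k` through `X 0` follows by induction on `k`, and multiplying it out with
`X 0 = !![1, -a; 0, m]` gives the explicit entries.
-/

/-- For `k ≥ 1`, if `k` is odd then
`X̂ₖ = [[βₖ₋₁, m·αₖ₋₁ − a·βₖ₋₁], [βₖ, m·αₖ − a·βₖ]]`, and if `k` is even then
`X̂ₖ = [[βₖ, m·αₖ − a·βₖ], [βₖ₋₁, m·αₖ₋₁ − a·βₖ₋₁]]`; equivalently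
`X̂ₖ = [[βₖ₋₁, αₖ₋₁], [βₖ, αₖ]] · X̂₀` for odd `k` and
`X̂ₖ = [[βₖ, αₖ], [βₖ₋₁, αₖ₋₁]] · X̂₀` for even `k`. -/
theorem qin_state_convergents (a m : ℤ) (ha : 1 < a) (ham : a < m) (hgcd : Int.gcd a m = 1)
    (q : ℕ → ℤ) (X : ℕ → Matrix (Fin 2) (Fin 2) ℤ)
    (hX0 : X 0 = !![1, -a; 0, m])
    (hXodd : ∀ k, Odd k → X k = !![1, 0; q k, 1] * X (k - 1))
    (hXeven : ∀ k, 0 < k → Even k → X k = !![1, q k; 0, 1] * X (k - 1))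
    (α β : ℕ → ℤ)
    (hα0 : α 0 = 0) (hα1 : α 1 = 1)
    (hα : ∀ k, 2 ≤ k → α k = q k * α (k - 1) + α (k - 2))
    (hβ0 : β 0 = 1) (hβ1 : β 1 = q 1)
    (hβ : ∀ k, 2 ≤ k → β k = q k * β (k - 1) + β (k - 2)) :
    ∀ k, 1 ≤ k →
      (Odd k →
        X k = !![β (k - 1), m * α (k - 1) - a * β (k - 1); β k, m * α k - a * β k] ∧
        X k = !![β (k - 1), α (k - 1); β k, α k] * X 0) ∧
      (Even k →
        X k = !![β k, m * α k - a * β k; β (k - 1), m * α (k - 1) - a * β (k - 1)] ∧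
        X k = !![β k, α k; β (k - 1), α (k - 1)] * X 0) := by
  -- The factorized form, by induction; the parity alternates at each step.
  have key : ∀ k, 1 ≤ k →
      (Odd k → X k = !![β (k - 1), α (k - 1); β k, α k] * X 0) ∧
      (Even k → X k = !![β k, α k; β (k - 1), α (k - 1)] * X 0) := by
    intro k hk
    induction k, hk using Nat.le_induction with
    | base =>
      refine ⟨fun h => ?_, fun h => absurd h (by decide)⟩
      rw [hXodd 1 h]
      simp [hα0, hα1, hβ0, hβ1]
    | succ n hn ih =>
      have hαn := hα (n + 1) (by omega)
      have hβn := hβ (n + 1) (by omega)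
      rw [show n + 1 - 2 = n - 1 by omega, Nat.add_sub_cancel] at hαn hβn
      constructor
      · intro h
        have hn' : Even n := by grind
        rw [hXodd _ h, Nat.add_sub_cancel, ih.2 hn', ← Matrix.mul_assoc, Matrix.mul_fin_two,
          hαn, hβn]
        simp only [one_mul, zero_mul, add_zero]
      · intro h
        have hn' : Odd n := by grind
        rw [hXeven (n + 1) n.succ_pos h, Nat.add_sub_cancel, ih.1 hn', ← Matrix.mul_assoc,
          Matrix.mul_fin_two, hαn, hβn]
        simp only [one_mul, zero_mul, zero_add, add_comm (β (n - 1)), add_comm (α (n - 1))]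
  have expand : ∀ b c d e : ℤ,
      !![b, c; d, e] * X 0 = !![b, m * c - a * b; d, m * e - a * d] := by
    intro b c d e
    rw [hX0, Matrix.mul_fin_two]
    congr! 4 <;> ring_nf
  intro k hk
  refine ⟨fun h => ⟨?_, (key k hk).1 h⟩, fun h => ⟨?_, (key k hk).2 h⟩⟩
  · rw [(key k hk).1 h, expand]
  · rw [(key k hk).2 h, expand]
end

section
/- For every index k ≥ 0, the two rows v₁⁽ᵏ⁾ = (x₁₁⁽ᵏ⁾, −x₁₂⁽ᵏ⁾) and v₂⁽ᵏ⁾ = (x₂₁⁽ᵏ⁾, x₂₂⁽ᵏ⁾) of the s-state X̂ₖ form a ℤ-basis of Λ(a, m): every vector of Λ(a, m) is an integer linear combination of v₁⁽ᵏ⁾ and v₂⁽ᵏ⁾ in a unique way, and both rows lie in Λ(a, m). -/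
/-!
Passing from one s-state to the next adds an integer multiple of one row to the other, which is
an invertible operation over `ℤ`; hence "the rows form a ℤ-basis of `Λ(a, m)`" is invariant
(`RowsBasis.lower`, `RowsBasis.upper`). It holds initially (`rowsBasis_initial`): in
`(x, y) = x • (1, -a) + d • (0, m)` the coefficient `d` is forced to satisfy `a x + y = m d`,
which has a unique solution exactly because `m ∣ a x + y` and `m ≠ 0`.
-/

/-- The rows of `A` form a ℤ-basis of `Λ(a, m) = {(x, y) | m ∣ a x + y}`, expressed as membership
of both rows together with unique existence of integer coordinates. -/
def RowsBasis (a m : ℤ) (A : Matrix (Fin 2) (Fin 2) ℤ) : Prop :=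
  (m ∣ a * A 0 0 + A 0 1) ∧ (m ∣ a * A 1 0 + A 1 1) ∧
    ∀ v : ℤ × ℤ, m ∣ a * v.1 + v.2 →
      ∃! c : ℤ × ℤ, v = (c.1 * A 0 0 + c.2 * A 1 0, c.1 * A 0 1 + c.2 * A 1 1)

theorem rowsBasis_initial {a m : ℤ} (hm : m ≠ 0) : RowsBasis a m !![1, -a; 0, m] := by
  refine ⟨by simp, by simp, ?_⟩
  rintro ⟨x, y⟩ ⟨d, hd⟩
  refine ⟨(x, d), ?_, ?_⟩
  · ext
    · simp
    · simp
      linear_combination hd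
  · rintro ⟨c, e⟩ h
    simp at h hd ⊢
    obtain ⟨rfl, h2⟩ := h
    exact ⟨rfl, mul_left_cancel₀ hm (by linear_combination hd - h2)⟩

theorem RowsBasis.lower {a m : ℤ} {A : Matrix (Fin 2) (Fin 2) ℤ} (h : RowsBasis a m A) (q : ℤ) :
    RowsBasis a m (!![1, 0; q, 1] * A) := by
  obtain ⟨h1, h2, h3⟩ := h
  simp only [RowsBasis, Matrix.mul_apply, Fin.sum_univ_two, Matrix.of_apply, Matrix.cons_val',
    Matrix.cons_val_zero, Matrix.cons_val_one, Matrix.cons_val_fin_one, one_mul, zero_mul, add_zero]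
  refine ⟨h1, ?_, fun v hv => ?_⟩
  · obtain ⟨s, hs⟩ := h1
    obtain ⟨t, ht⟩ := h2
    exact ⟨q * s + t, by linear_combination q * hs + ht⟩
  · obtain ⟨⟨c, d⟩, hc, hu⟩ := h3 v hv
    -- Coordinates `(c', d')` in the new basis become `(c' + d' q, d')` in the old one.
    refine ⟨(c - d * q, d), ?_, ?_⟩
    · rw [hc]
      ext <;> ring
    · rintro ⟨c', d'⟩ h'
      have := hu (c' + d' * q, d') (by rw [h']; ext <;> ring)
      simp only [Prod.mk.injEq] at this ⊢
      obtain ⟨e1, rfl⟩ := this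
      exact ⟨by linarith, rfl⟩

theorem RowsBasis.upper {a m : ℤ} {A : Matrix (Fin 2) (Fin 2) ℤ} (h : RowsBasis a m A) (q : ℤ) :
    RowsBasis a m (!![1, q; 0, 1] * A) := by
  obtain ⟨h1, h2, h3⟩ := h
  simp only [RowsBasis, Matrix.mul_apply, Fin.sum_univ_two, Matrix.of_apply, Matrix.cons_val',
    Matrix.cons_val_zero, Matrix.cons_val_one, Matrix.cons_val_fin_one, one_mul, zero_mul, zero_add]
  refine ⟨?_, h2, fun v hv => ?_⟩
  · obtain ⟨s, hs⟩ := h1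
    obtain ⟨t, ht⟩ := h2
    exact ⟨s + q * t, by linear_combination hs + q * ht⟩
  · obtain ⟨⟨c, d⟩, hc, hu⟩ := h3 v hv
    -- Coordinates `(c', d')` in the new basis become `(c', d' + c' q)` in the old one.
    refine ⟨(c, d - c * q), ?_, ?_⟩
    · rw [hc]
      ext <;> ring
    · rintro ⟨c', d'⟩ h'
      have := hu (c', d' + c' * q) (by rw [h']; ext <;> ring)
      simp only [Prod.mk.injEq] at this ⊢
      obtain ⟨rfl, e2⟩ := this
      exact ⟨rfl, by linarith⟩

/-- for every `k ≥ 0`, the rows `v₁⁽ᵏ⁾ = (x₁₁⁽ᵏ⁾, −x₁₂⁽ᵏ⁾)` and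
`v₂⁽ᵏ⁾ = (x₂₁⁽ᵏ⁾, x₂₂⁽ᵏ⁾)` of the s-state `X̂ₖ` form a ℤ-basis of
`Λ(a, m) = {(x, y) ∈ ℤ² : m ∣ a·x + y}`: both rows lie in `Λ(a, m)` and every vector of
`Λ(a, m)` is an integer linear combination of them in a unique way. -/
theorem qin_state_basis (a m : ℤ) (ha : 1 < a) (ham : a < m) (hgcd : Int.gcd a m = 1)
    (q : ℕ → ℤ) (X : ℕ → Matrix (Fin 2) (Fin 2) ℤ)
    (hX0 : X 0 = !![1, -a; 0, m])
    (hXodd : ∀ k, Odd k → X k = !![1, 0; q k, 1] * X (k - 1))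
    (hXeven : ∀ k, 0 < k → Even k → X k = !![1, q k; 0, 1] * X (k - 1)) :
    ∀ k, (m ∣ a * X k 0 0 + X k 0 1) ∧ (m ∣ a * X k 1 0 + X k 1 1) ∧
      ∀ v : ℤ × ℤ, m ∣ a * v.1 + v.2 →
        ∃! c : ℤ × ℤ,
          v = (c.1 * X k 0 0 + c.2 * X k 1 0, c.1 * X k 0 1 + c.2 * X k 1 1) := by
  suffices h : ∀ k, RowsBasis a m (X k) from h
  intro k
  induction k with
  | zero =>
    rw [hX0]
    exact rowsBasis_initial (by linarith)
  | succ k ih =>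
    rcases Nat.even_or_odd (k + 1) with hk | hk
    · rw [hXeven _ k.succ_pos hk]
      exact ih.upper _
    · rw [hXodd _ hk]
      exact ih.lower _
end

section
/- If a² < m, then (1, −a) is a shortest vector of Λ(a, m). -/
/-! Let `(x, y)` be a nonzero lattice vector. If `a * x + y = 0`, it is an integer multiple of
`(1, -a)`. Otherwise `|a * x + y| ≥ m ≥ a ^ 2 + 1`, and the Cauchy–Schwarz inequality
`(a * x + y) ^ 2 ≤ (a ^ 2 + 1) * (x ^ 2 + y ^ 2)` gives `x ^ 2 + y ^ 2 ≥ a ^ 2 + 1`. -/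

/-- `v` is a shortest vector of the lattice `Λ(a, m) = {(x, y) ∈ ℤ² : m ∣ a·x + y}`:
it is a nonzero lattice vector whose Euclidean norm (equivalently, squared norm)
is minimal among all nonzero lattice vectors. -/
def IsShortestVec (a m : ℤ) (v : ℤ × ℤ) : Prop :=
  (m ∣ a * v.1 + v.2) ∧ v ≠ 0 ∧
    ∀ w : ℤ × ℤ, (m ∣ a * w.1 + w.2) → w ≠ 0 →
      v.1 ^ 2 + v.2 ^ 2 ≤ w.1 ^ 2 + w.2 ^ 2

/-- if `a² < m`, then `(1, −a)` is a shortest vector of `Λ(a, m)`. -/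
theorem shortest_one_neg_a (a m : ℤ) (ha : 1 < a) (ham : a < m) (hgcd : Int.gcd a m = 1)
    (hsq : a ^ 2 < m) : IsShortestVec a m (1, -a) := by
  refine ⟨by simp, by simp, ?_⟩
  rintro ⟨x, y⟩ hw hne
  simp only at hw ⊢
  by_cases h0 : a * x + y = 0
  -- On the line `a * x + y = 0` the vector is `x • (1, -a)` with `x ≠ 0`.
  · have hy : y = -a * x := by linarith
    have hx : x ≠ 0 := by
      rintro rfl
      exact hne (by simp [hy])
    have hx2 : 1 ≤ x ^ 2 := by
      have : 0 < x ^ 2 := by positivity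
      linarith
    subst hy
    nlinarith [mul_le_mul_of_nonneg_right hx2 (by positivity : 0 ≤ 1 + a ^ 2)]
  -- Off that line `|a * x + y| ≥ m ≥ a ^ 2 + 1`, and Cauchy–Schwarz applies.
  · have hm : m ≤ |a * x + y| :=
      Int.le_of_dvd (abs_pos.mpr h0) ((dvd_abs _ _).mpr hw)
    have hle : a ^ 2 + 1 ≤ |a * x + y| := by linarith [Int.add_one_le_iff.mpr hsq]
    have hsq' : (a ^ 2 + 1) ^ 2 ≤ (a * x + y) ^ 2 := by
      rw [← sq_abs (a * x + y)]
      exact pow_le_pow_left₀ (by positivity) hle 2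
    have hcs : (a ^ 2 + 1) * (a ^ 2 + 1) ≤ (a ^ 2 + 1) * (x ^ 2 + y ^ 2) := by
      linarith [sq_nonneg (x - a * y)]
    linarith [le_of_mul_le_mul_left hcs (by positivity)]
end

section
/- Let u be the integer with 0 < u < m and a·u ≡ 1 (mod m). If u² < m, then (u, −1) is a shortest vector of Λ(a, m). -/
/-- if `u` is the integer with `0 < u < m` and `a·u ≡ 1 (mod m)`, and
`u² < m`, then `(u, −1)` is a shortest vector of `Λ(a, m)`. -/
theorem shortest_inv_neg_one (a m : ℤ) (ha : 1 < a) (ham : a < m) (hgcd : Int.gcd a m = 1)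
    (u : ℤ) (hu0 : 0 < u) (hum : u < m) (hinv : m ∣ a * u - 1)
    (hsq : u ^ 2 < m) : IsShortestVec a m (u, -1) := by
  refine ⟨by simpa [sub_eq_add_neg] using hinv, by simp, ?_⟩
  rintro ⟨x, y⟩ hw hne
  dsimp only at hw ⊢
  have hdvd : m ∣ x + u * y := by
    have h := dvd_sub (hw.mul_left u) (hinv.mul_left x)
    have e : u * (a * x + y) - x * (a * u - 1) = x + u * y := by ring
    rwa [e] at h
  by_cases h0 : x + u * y = 0
  · have hx : x = -(u * y) := by linarith
    have hy : y ≠ 0 := by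
      rintro rfl
      exact hne (by simp [hx])
    have hy2 : 1 ≤ y ^ 2 := by
      have : 0 < y ^ 2 := by positivity
      linarith
    rw [hx]
    nlinarith [mul_le_mul_of_nonneg_left hy2 (sq_nonneg u)]
  · have hm : m ≤ |x + u * y| :=
      Int.le_of_dvd (abs_pos.mpr h0) ((dvd_abs _ _).mpr hdvd)
    have hle : u ^ 2 + 1 ≤ |x + u * y| := by linarith
    have hsq2 : (u ^ 2 + 1) ^ 2 ≤ (x + u * y) ^ 2 := by
      rw [← sq_abs (x + u * y)]
      gcongr
    -- Cauchy–Schwarz, via the Lagrange identity with remainder `(u * x - y) ^ 2`.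
    have hcs : (u ^ 2 + 1) * (u ^ 2 + 1) ≤ (u ^ 2 + 1) * (x ^ 2 + y ^ 2) := by
      nlinarith [sq_nonneg (u * x - y)]
    have := le_of_mul_le_mul_left hcs (by positivity)
    linarith
end

section
/- If all the integers qₖ are positive, then the sequence {𝓘ₖ} is strictly increasing, i.e. 𝓘ₖ₋₁ < 𝓘ₖ for all k ≥ 1, and its initial value is 𝓘₀ = −a·m < 0. -/
/-! Each step adds `qₖ` times one row of the matrix to the other, so it adds `qₖ ‖v‖²` to the inner
product of the rows, where `v` is the row left unchanged. Row additions preserve the determinant,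
which is `m ≠ 0` at the start, so no row ever vanishes and every increment is positive. -/

/-- A row of a `2 × 2` integer matrix of nonzero determinant has positive squared norm. -/
lemma row_sq_pos {A : Matrix (Fin 2) (Fin 2) ℤ} (h : A.det ≠ 0) (i : Fin 2) :
    0 < A i 0 ^ 2 + A i 1 ^ 2 := by
  by_contra! hle
  have h0 : A i 0 = 0 := by nlinarith [sq_nonneg (A i 0), sq_nonneg (A i 1)]
  have h1 : A i 1 = 0 := by nlinarith [sq_nonneg (A i 0), sq_nonneg (A i 1)]
  refine h (Matrix.det_eq_zero_of_row_eq_zero i fun j => ?_)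
  fin_cases j
  · exact h0
  · exact h1


/-- if all the `qₖ` are positive, then the sequence of inner products
`𝓘ₖ = ⟨v₁⁽ᵏ⁾, v₂⁽ᵏ⁾⟩` is strictly increasing, i.e. `𝓘ₖ₋₁ < 𝓘ₖ` for all `k ≥ 1`, and
its initial value is `𝓘₀ = −a·m < 0`. -/
theorem qin_inner_increasing (a m : ℤ) (ha : 1 < a) (ham : a < m) (hgcd : Int.gcd a m = 1)
    (q : ℕ → ℤ) (hq : ∀ k, 1 ≤ k → 0 < q k)
    (X : ℕ → Matrix (Fin 2) (Fin 2) ℤ)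
    (hX0 : X 0 = !![1, -a; 0, m])
    (hXodd : ∀ k, Odd k → X k = !![1, 0; q k, 1] * X (k - 1))
    (hXeven : ∀ k, 0 < k → Even k → X k = !![1, q k; 0, 1] * X (k - 1))
    (I : ℕ → ℤ) (hI : ∀ k, I k = X k 0 0 * X k 1 0 + X k 0 1 * X k 1 1) :
    (∀ k, 1 ≤ k → I (k - 1) < I k) ∧ I 0 = -(a * m) ∧ I 0 < 0 := by
  have hdet : ∀ k, (X k).det = m := by
    intro k
    induction k with
    | zero => simp [hX0, Matrix.det_fin_two]
    | succ k ih =>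
      rcases Nat.even_or_odd (k + 1) with h | h
      · rw [hXeven (k + 1) k.succ_pos h, Matrix.det_mul, Nat.add_sub_cancel, ih]
        simp [Matrix.det_fin_two]
      · rw [hXodd _ h, Matrix.det_mul, Nat.add_sub_cancel, ih]
        simp [Matrix.det_fin_two]
  have hne : ∀ k, (X k).det ≠ 0 := fun k => by rw [hdet]; omega
  have hI0 : I 0 = -(a * m) := by simp [hI, hX0]
  refine ⟨fun k hk => ?_, hI0, by rw [hI0]; nlinarith⟩
  rcases Nat.even_or_odd k with h | h
  · have key : I k = I (k - 1) + q k * (X (k - 1) 1 0 ^ 2 + X (k - 1) 1 1 ^ 2) := by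
      rw [hI, hI, hXeven k hk h]
      simp [Matrix.mul_apply, Fin.sum_univ_two]
      ring
    linarith [mul_pos (hq k hk) (row_sq_pos (hne (k - 1)) 1)]
  · have key : I k = I (k - 1) + q k * (X (k - 1) 0 0 ^ 2 + X (k - 1) 0 1 ^ 2) := by
      rw [hI, hI, hXodd k h]
      simp [Matrix.mul_apply, Fin.sum_univ_two]
      ring
    linarith [mul_pos (hq k hk) (row_sq_pos (hne (k - 1)) 0)]
end

section
/- Let N = n − 1 and suppose N is even and a·β_N − m·α_N = 1 (so that β_N is the least positive residue of a⁻¹ modulo m, and the final s-state of Qin's algorithm is X̂_N = [[β_N, −1], [β_{N−1}, m·α_{N−1} − a·β_{N−1}]]). If β_N² ≥ m, then the inner product of the rows of the final s-state is positive, i.e. β_N·β_{N−1} − (m·α_{N−1} − a·β_{N−1}) > 0. -/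
theorem convergent_det (q α β : ℕ → ℤ)
    (hα0 : α 0 = 0) (hα1 : α 1 = 1)
    (hα : ∀ k, 2 ≤ k → α k = q k * α (k - 1) + α (k - 2))
    (hβ0 : β 0 = 1)
    (hβ : ∀ k, 2 ≤ k → β k = q k * β (k - 1) + β (k - 2)) (k : ℕ) :
    α (k + 1) * β k - α k * β (k + 1) = (-1) ^ k := by
  induction k with
  | zero => simp [hα0, hα1, hβ0]
  | succ k ih =>
    have h1 : α (k + 2) = q (k + 2) * α (k + 1) + α k := hα (k + 2) (by omega)
    have h2 : β (k + 2) = q (k + 2) * β (k + 1) + β k := hβ (k + 2) (by omega)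
    rw [h1, h2, pow_succ, ← ih]
    ring

theorem denominator_pos (n : ℕ) (q β : ℕ → ℤ) (hq : ∀ k, 1 ≤ k → k ≤ n → 0 < q k)
    (hβ0 : β 0 = 1) (hβ1 : β 1 = q 1)
    (hβ : ∀ k, 2 ≤ k → β k = q k * β (k - 1) + β (k - 2)) (k : ℕ) (hk : k ≤ n) :
    0 < β k := by
  induction k using Nat.strong_induction_on with
  | _ k ih =>
    match k with
    | 0 => simp [hβ0]
    | 1 => rw [hβ1]; exact hq 1 le_rfl hk
    | k + 2 =>
      have h2 : β (k + 2) = q (k + 2) * β (k + 1) + β k := hβ (k + 2) (by omega)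
      have hk0 := ih k (by omega) (by omega)
      have hk1 := ih (k + 1) (by omega) (by omega)
      have hqk := hq (k + 2) (by omega) hk
      rw [h2]
      positivity

/-- let `N = n − 1` be even with `a·β_N − m·α_N = 1` (so `β_N` is the least
positive residue of `a⁻¹` mod `m` and the final s-state is
`X̂_N = [[β_N, −1], [β_{N−1}, m·α_{N−1} − a·β_{N−1}]]`). If `β_N² ≥ m`, then the inner
product of the rows of the final s-state is positive:
`β_N·β_{N−1} − (m·α_{N−1} − a·β_{N−1}) > 0`. -/
theorem final_inner_pos (a m : ℤ) (ha : 1 < a) (ham : a < m) (hgcd : Int.gcd a m = 1)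
    (n : ℕ) (q : ℕ → ℤ) (hq : ∀ k, 1 ≤ k → k ≤ n → 0 < q k)
    (hcf : (a : ℚ) / (m : ℚ) = cfVal (List.ofFn fun i : Fin n => q (i.1 + 1)))
    (α β : ℕ → ℤ)
    (hα0 : α 0 = 0) (hα1 : α 1 = 1)
    (hα : ∀ k, 2 ≤ k → α k = q k * α (k - 1) + α (k - 2))
    (hβ0 : β 0 = 1) (hβ1 : β 1 = q 1)
    (hβ : ∀ k, 2 ≤ k → β k = q k * β (k - 1) + β (k - 2))
    (N : ℕ) (hN : N = n - 1) (hNeven : Even N)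
    (hfin : a * β N - m * α N = 1)
    (hge : m ≤ (β N) ^ 2) :
    0 < β N * β (N - 1) - (m * α (N - 1) - a * β (N - 1)) := by
  rcases N with _ | M
  -- For `N = 0` the hypothesis `a β₀ - m α₀ = 1` reads `a = 1`.
  · rw [hα0, hβ0] at hfin
    omega
  · have hdet := convergent_det q α β hα0 hα1 hα hβ0 hβ M
    have hM : Odd M := by
      rcases Nat.even_or_odd M with h | h
      · exact absurd hNeven (by simpa [Nat.even_add_one] using h)
      · exact h
    rw [hM.neg_one_pow] at hdet
    have hx := denominator_pos n q β hq hβ0 hβ1 hβ (M + 1) (by omega)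
    have hy := denominator_pos n q β hq hβ0 hβ1 hβ M (by omega)
    simp only [Nat.add_sub_cancel]
    have hd : β (M + 1) * (m * α M - a * β M) = m - β M := by
      linear_combination -m * hdet - β M * hfin
    refine pos_of_mul_pos_right (a := β (M + 1)) ?_ hx.le
    rw [mul_sub, hd]
    nlinarith [mul_le_mul_of_nonneg_right hge hy.le, mul_nonneg (by omega : 0 ≤ m) (by omega : 0 ≤ β M - 1)]
end

section
/- There exists an even integer N ≥ 2 such that for all 1 ≤ k ≤ N the divisors in the recursion are positive (x₁₂⁽ᵏ⁾ ≥ 1 and x₂₂⁽ᵏ⁾ ≥ 1), x₁₂⁽ᴺ⁾ = 1, and the output of Qin's algorithm is correct: 0 < x₁₁⁽ᴺ⁾ < m and a·x₁₁⁽ᴺ⁾ ≡ 1 (mod m). In particular, Qin's 'DaYan deriving one' algorithm, using division with least positive remainder, terminates after an even number of steps with right-above entry equal to 1 and left-above entry equal to the modular inverse of a modulo m. -/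
/-!
Call `(p, b, r, c) = (x₁₁, x₁₂, x₂₁, x₂₂)` the state. Row operations preserve
`p * c + r * b = m`, the congruence `a * p ≡ b (mod m)` and the coprimality of `b` and `c`;
because the remainders are least *positive*, `b` and `c` also stay positive (`QinInv`).

Termination: if `b > 1`, then the remainder `c'` of `c` lies in `[1, b]` and differs from `b` by
coprimality, and the remainder of `b` modulo `c'` lies in `[1, c']`. So one odd step followed by
one even step strictly decreases `b` (`QinInv.step`), and `b = 1` occurs after an even number of
steps. There the congruence reads `a * p ≡ 1`, and `p * c + r = m` forces `p < m`, as `r = 0` is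
possible only as long as `b < c`.
-/

/-- The invariant of the state `(p, b, r, c) = (x₁₁, x₁₂, x₂₁, x₂₂)` after an even number of steps.
The field `strict` says that `r` can vanish only as long as `b < c`, as in the initial state. -/
structure QinInv (a m p b r c : ℤ) : Prop where
  p_pos : 1 ≤ p
  b_pos : 1 ≤ b
  r_nonneg : 0 ≤ r
  c_pos : 1 ≤ c
  strict : 1 ≤ r ∨ b < c
  det : p * c + r * b = m
  cop : IsCoprime b c
  cong : m ∣ a * p - b
  cong' : m ∣ a * r + c

/-- The quotient `⌊(c - 1) / b⌋` leaves a remainder in `[1, b]`. -/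
lemma lpr_bounds {b c : ℤ} (hb : 1 ≤ b) (hc : 1 ≤ c) :
    0 ≤ Int.fdiv (c - 1) b ∧ 1 ≤ c - Int.fdiv (c - 1) b * b ∧
      c - Int.fdiv (c - 1) b * b ≤ b := by
  rw [Int.fdiv_eq_ediv_of_nonneg _ (by omega)]
  have h1 := Int.emod_add_mul_ediv (c - 1) b
  have h2 := Int.emod_nonneg (c - 1) (b := b) (by omega)
  have h3 := Int.emod_lt_of_pos (c - 1) (b := b) (by omega)
  refine ⟨Int.ediv_nonneg (by omega) (by omega), ?_, ?_⟩ <;> linarith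

/-- An odd step followed by an even step preserves the invariant and decreases the right-above
entry, unless that entry is already `1`. -/
lemma QinInv.step {a m p b r c p' b' r' c' : ℤ} (h : QinInv a m p b r c) (hb : b ≠ 1)
    (hr' : r' = r + Int.fdiv (c - 1) b * p) (hc' : c' = c - Int.fdiv (c - 1) b * b)
    (hp' : p' = p + Int.fdiv (b - 1) c' * r') (hb' : b' = b - Int.fdiv (b - 1) c' * c') :
    QinInv a m p' b' r' c' ∧ b' < b := by
  obtain ⟨hp1, hb1, hr0, hc1, hs, hdet, hcop, hcong, hcong'⟩ := h
  obtain ⟨hq0, hl, hu⟩ := lpr_bounds hb1 hc1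
  rw [← hc'] at hl hu
  obtain ⟨ht0, hl2, hu2⟩ := lpr_bounds hl hb1
  rw [← hb'] at hl2 hu2
  generalize Int.fdiv (c - 1) b = q at *
  generalize Int.fdiv (b - 1) c' = t at *
  have hcop1 : IsCoprime b c' := by
    have := hcop.add_mul_left_right (-q)
    rwa [show c + b * -q = c' by rw [hc']; ring] at this
  have hcop2 : IsCoprime b' c' := by
    have := hcop1.add_mul_left_left (-t)
    rwa [show b + c' * -t = b' by rw [hb']; ring] at this
  -- `c' = b` would make `b` coprime to itself, that is, a unit.
  have hne : c' ≠ b := by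
    rintro rfl
    rcases Int.isUnit_iff.mp (isCoprime_self.mp hcop1) with h | h <;> omega
  have hr1 : 1 ≤ r' := by
    rcases hs with hs | hs
    · nlinarith [mul_nonneg hq0 (by omega : 0 ≤ p)]
    · have : q ≠ 0 := by rintro rfl; omega
      have : 1 ≤ q := by omega
      nlinarith
  refine ⟨⟨?_, hl2, by omega, hl, Or.inl hr1, ?_, hcop2, ?_, ?_⟩, by omega⟩
  · nlinarith [mul_nonneg ht0 (by omega : 0 ≤ r')]
  · rw [hp', hb', ← hdet]
    linear_combination b * hr' + p * hc'
  · have h2 : m ∣ a * r' + c' := by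
      have := hcong'.add (hcong.mul_left q)
      rwa [show a * r + c + q * (a * p - b) = a * r' + c' by rw [hr', hc']; ring] at this
    have := hcong.add (h2.mul_left t)
    rwa [show a * p - b + t * (a * r' + c') = a * p' - b' by rw [hp', hb']; ring] at this
  · have := hcong'.add (hcong.mul_left q)
    rwa [show a * r + c + q * (a * p - b) = a * r' + c' by rw [hr', hc']; ring] at this


/-- Qin's 'DaYan deriving one' algorithm with least-positive-remainder
division (quotient `⌊(c − 1)/d⌋`, i.e. `Int.fdiv (c - 1) d`) terminates correctly:
there is an even `N ≥ 2` such that all divisors `x₁₂⁽ᵏ⁾, x₂₂⁽ᵏ⁾` for `1 ≤ k ≤ N` are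
positive, `x₁₂⁽ᴺ⁾ = 1`, and `x₁₁⁽ᴺ⁾` is the modular inverse of `a` modulo `m` with
`0 < x₁₁⁽ᴺ⁾ < m`. -/
theorem qin_algorithm_correct (a m : ℤ) (ha : 1 < a) (ham : a < m) (hgcd : Int.gcd a m = 1)
    (x11 x12 x21 x22 : ℕ → ℤ)
    (h110 : x11 0 = 1) (h120 : x12 0 = a) (h210 : x21 0 = 0) (h220 : x22 0 = m)
    (hodd : ∀ k, Odd k →
      x11 k = x11 (k - 1) ∧ x12 k = x12 (k - 1) ∧
      x21 k = x21 (k - 1) + Int.fdiv (x22 (k - 1) - 1) (x12 (k - 1)) * x11 (k - 1) ∧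
      x22 k = x22 (k - 1) - Int.fdiv (x22 (k - 1) - 1) (x12 (k - 1)) * x12 (k - 1))
    (heven : ∀ k, 0 < k → Even k →
      x21 k = x21 (k - 1) ∧ x22 k = x22 (k - 1) ∧
      x11 k = x11 (k - 1) + Int.fdiv (x12 (k - 1) - 1) (x22 (k - 1)) * x21 (k - 1) ∧
      x12 k = x12 (k - 1) - Int.fdiv (x12 (k - 1) - 1) (x22 (k - 1)) * x22 (k - 1)) :
    ∃ N : ℕ, Even N ∧ 2 ≤ N ∧
      (∀ k, 1 ≤ k → k ≤ N → 1 ≤ x12 k ∧ 1 ≤ x22 k) ∧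
      x12 N = 1 ∧ 0 < x11 N ∧ x11 N < m ∧ Int.ModEq m (a * x11 N) 1 := by
  -- Strong induction on the right-above entry after `2 * n` steps.
  have key : ∀ t : ℕ, ∀ n : ℕ, (x12 (2 * n)).toNat = t →
      QinInv a m (x11 (2 * n)) (x12 (2 * n)) (x21 (2 * n)) (x22 (2 * n)) →
      (∀ k, 1 ≤ k → k ≤ 2 * n → 1 ≤ x12 k ∧ 1 ≤ x22 k) →
      ∃ N : ℕ, Even N ∧ 2 ≤ N ∧
        (∀ k, 1 ≤ k → k ≤ N → 1 ≤ x12 k ∧ 1 ≤ x22 k) ∧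
        x12 N = 1 ∧ 0 < x11 N ∧ x11 N < m ∧ Int.ModEq m (a * x11 N) 1 := by
    intro t
    induction t using Nat.strong_induction_on with
    | _ t ih =>
      intro n hn hI hpos
      by_cases h1 : x12 (2 * n) = 1
      · have hn0 : n ≠ 0 := by
          rintro rfl
          rw [Nat.mul_zero] at h1
          omega
        obtain ⟨hp1, -, hr0, hc1, hs, hdet, -, hcong, -⟩ := hI
        rw [h1] at hs hdet hcong
        refine ⟨2 * n, even_two_mul n, by omega, hpos, h1, by omega, ?_, ?_⟩
        · rcases hs with hs | hs <;> nlinarith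
        · exact (Int.modEq_iff_dvd.mpr hcong).symm
      · obtain ⟨e1, e2, e3, e4⟩ := hodd (2 * n + 1) (odd_two_mul_add_one n)
        obtain ⟨f1, f2, f3, f4⟩ := heven (2 * (n + 1)) (by omega) (even_two_mul _)
        rw [Nat.add_sub_cancel] at e1 e2 e3 e4
        rw [show 2 * (n + 1) - 1 = 2 * n + 1 by omega] at f1 f2 f3 f4
        rw [e1, ← f1, ← f2] at f3
        rw [e2, ← f2] at f4
        rw [e2] at f3
        obtain ⟨hI', hlt⟩ := hI.step h1 (f1.trans e3) (f2.trans e4) f3 f4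
        have hb := hI.b_pos
        have hb' := hI'.b_pos
        have hc' := hI'.c_pos
        refine ih _ (by omega) (n + 1) rfl hI' fun k hk1 hk2 => ?_
        rcases (by omega : k ≤ 2 * n ∨ k = 2 * n + 1 ∨ k = 2 * (n + 1)) with hk | rfl | rfl
        · exact hpos k hk1 hk
        · exact ⟨e2 ▸ hb, f2 ▸ hc'⟩
        · exact ⟨hb', hc'⟩
  refine key _ 0 rfl ?_ (fun k hk1 hk2 => by omega)
  rw [Nat.mul_zero, h110, h120, h210, h220]
  exact ⟨le_rfl, by omega, le_rfl, by omega, Or.inr ham, by ring,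
    Int.isCoprime_iff_gcd_eq_one.mpr hgcd, by simp, by simp⟩
end
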